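/- Let u₁, …, u_T ∈ ℝ^d with ‖u_t‖ ≤ M for all t, let σ' ≥ 0, and let θ₀, θ ∈ ℝ^d with ‖θ − θ₀‖ ≤ 1/M. If Σ_{t=1}^T φ(⟨u_t, θ₀⟩)(1 − φ(⟨u_t, θ₀⟩)) ⟨u_t, v⟩² ≥ σ'‖v‖² for every v ∈ ℝ^d, then Σ_{t=1}^T φ(⟨u_t, θ⟩)(1 − φ(⟨u_t, θ⟩)) ⟨u_t, v⟩² ≥ (σ'/e)‖v‖² for every v ∈ ℝ^d. -/

import Mathlib

/-!
The weight `φ(x)(1 - φ(x))` equals `1 / (e^{x/2} + e^{-x/2})²`. Moving `x` by at most `1` multiplies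
each of `e^{x/2}` and `e^{-x/2}` by at most `e^{1/2}`, hence the weight changes by a factor of at
most `e` (`logistic_weight_le`). By Cauchy–Schwarz, `|⟨u_t, θ⟩ - ⟨u_t, θ₀⟩| ≤ M · (1/M) = 1`, so the
comparison holds term by term in the quadratic form.
-/

open scoped RealInnerProductSpace BigOperators

/-- The logistic function `φ(x) = 1/(1 + e^{−x})`. -/
noncomputable def logistic (x : ℝ) : ℝ := 1 / (1 + Real.exp (-x))

lemma logistic_mul_one_sub (x : ℝ) :
    logistic x * (1 - logistic x) = 1 / (Real.exp (x / 2) + Real.exp (-(x / 2))) ^ 2 := by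
  have hpos : 0 < Real.exp (x / 2) := Real.exp_pos _
  have hx : Real.exp (-x) = (Real.exp (x / 2))⁻¹ ^ 2 := by
    rw [← Real.exp_neg, ← Real.exp_nat_mul]
    congr 1
    push_cast
    ring
  rw [logistic, hx, Real.exp_neg]
  field_simp
  ring

/-- The logarithm of `φ(1 - φ)` is `1`-Lipschitz, stated here at distance at most `1`. -/
lemma logistic_weight_le {a b : ℝ} (h : |a - b| ≤ 1) :
    logistic a * (1 - logistic a) / Real.exp 1 ≤ logistic b * (1 - logistic b) := by
  obtain ⟨h1, h2⟩ := abs_le.mp h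
  have hcosh : Real.exp (b / 2) + Real.exp (-(b / 2))
      ≤ Real.exp (1 / 2) * (Real.exp (a / 2) + Real.exp (-(a / 2))) := by
    rw [mul_add, ← Real.exp_add, ← Real.exp_add]
    gcongr <;> linarith
  have hsq : Real.exp 1 = Real.exp (1 / 2) ^ 2 := by
    rw [← Real.exp_nat_mul]
    norm_num
  rw [logistic_mul_one_sub, logistic_mul_one_sub, div_div, hsq, ← mul_pow]
  apply one_div_le_one_div_of_le (by positivity)
  rw [mul_comm] at hcosh
  gcongr

/-- If the logistic-weighted quadratic form at `θ₀` is `≥ σ'‖v‖²` and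
`‖θ − θ₀‖ ≤ 1/M` with `‖u_t‖ ≤ M`, then the quadratic form at `θ` is `≥ (σ'/e)‖v‖²`. -/
theorem logistic_quadratic_form_stability
    (d T : ℕ) (hd : 0 < d)
    (u : Fin T → EuclideanSpace ℝ (Fin d)) (M : ℝ) (hM : 0 < M)
    (hu : ∀ t, ‖u t‖ ≤ M)
    (σ' : ℝ) (hσ' : 0 ≤ σ')
    (θ₀ θ : EuclideanSpace ℝ (Fin d)) (hθ : ‖θ - θ₀‖ ≤ 1 / M)
    (h0 : ∀ v : EuclideanSpace ℝ (Fin d),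
      σ' * ‖v‖ ^ 2 ≤ ∑ t, logistic ⟪u t, θ₀⟫ * (1 - logistic ⟪u t, θ₀⟫) * ⟪u t, v⟫ ^ 2) :
    ∀ v : EuclideanSpace ℝ (Fin d),
      σ' / Real.exp 1 * ‖v‖ ^ 2
        ≤ ∑ t, logistic ⟪u t, θ⟫ * (1 - logistic ⟪u t, θ⟫) * ⟪u t, v⟫ ^ 2 := by
  intro v
  have hclose : ∀ t, |⟪u t, θ₀⟫ - ⟪u t, θ⟫| ≤ 1 := by
    intro t
    rw [← inner_sub_right]
    calc |⟪u t, θ₀ - θ⟫| ≤ ‖u t‖ * ‖θ₀ - θ‖ := abs_real_inner_le_norm _ _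
      _ ≤ M * (1 / M) := by
        rw [norm_sub_rev]
        exact mul_le_mul (hu t) hθ (norm_nonneg _) hM.le
      _ = 1 := by field_simp
  calc σ' / Real.exp 1 * ‖v‖ ^ 2 = σ' * ‖v‖ ^ 2 / Real.exp 1 := by ring
    _ ≤ (∑ t, logistic ⟪u t, θ₀⟫ * (1 - logistic ⟪u t, θ₀⟫) * ⟪u t, v⟫ ^ 2) / Real.exp 1 := by
      gcongr
      exact h0 v
    _ = ∑ t, logistic ⟪u t, θ₀⟫ * (1 - logistic ⟪u t, θ₀⟫) / Real.exp 1 * ⟪u t, v⟫ ^ 2 := by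
      rw [Finset.sum_div]
      exact Finset.sum_congr rfl fun t _ => by ring
    _ ≤ ∑ t, logistic ⟪u t, θ⟫ * (1 - logistic ⟪u t, θ⟫) * ⟪u t, v⟫ ^ 2 :=
      Finset.sum_le_sum fun t _ =>
        mul_le_mul_of_nonneg_right (logistic_weight_le (hclose t)) (sq_nonneg _)
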